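/- Let u ∈ ℝ[x_1,…,x_d] have total degree at most 4, let v ∈ P_A, and let w ∈ P_A satisfy w(a) = u(a) and ∇w(a) = ∇u(a) at every vertex a of K. Then for every pair of indices i ≠ j, ∫_K ∂²(u − w)/∂x_i∂x_j · ∂²v/∂x_i∂x_j dx = 0. -/

import Mathlib

open MvPolynomial MeasureTheory

/-- `Q₁`: the span of the monomials `x^α` with `α i ≤ 1` for every `i`. -/
noncomputable def Q1 (d : ℕ) : Submodule ℝ (MvPolynomial (Fin d) ℝ) :=
  Submodule.span ℝ {p | ∃ α : Fin d →₀ ℕ, (∀ i, α i ≤ 1) ∧ p = monomial α (1 : ℝ)}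

/-- The Adini shape function space `P_A = Q₁ + span{x_i² q : 1 ≤ i ≤ d, q ∈ Q₁}`. -/
noncomputable def PA (d : ℕ) : Submodule ℝ (MvPolynomial (Fin d) ℝ) :=
  Q1 d ⊔ Submodule.span ℝ {p | ∃ i : Fin d, ∃ q ∈ Q1 d, p = X i ^ 2 * q}

/-- `Q₁^i`: elements of `Q₁` of degree 0 in `x_i`. -/
noncomputable def Q1i (d : ℕ) (i : Fin d) : Submodule ℝ (MvPolynomial (Fin d) ℝ) :=
  Submodule.span ℝ
    {p | ∃ α : Fin d →₀ ℕ, (∀ j, α j ≤ 1) ∧ α i = 0 ∧ p = monomial α (1 : ℝ)}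

/-- `S^i = span{((x_j − c_j)² − h_j²) q̂ : 1 ≤ j ≤ d, q̂ ∈ Q₁^i}`. -/
noncomputable def Si (d : ℕ) (c h : Fin d → ℝ) (i : Fin d) :
    Submodule ℝ (MvPolynomial (Fin d) ℝ) :=
  Submodule.span ℝ
    {p | ∃ j : Fin d, ∃ q ∈ Q1i d i, p = ((X j - C (c j)) ^ 2 - C (h j ^ 2)) * q}

/-- The vertices of the `d`-rectangle with centre `c` and half-lengths `h`. -/
def IsVertex {d : ℕ} (c h : Fin d → ℝ) (a : Fin d → ℝ) : Prop :=
  ∀ i, a i = c i - h i ∨ a i = c i + h i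

/-- The `d`-rectangle `K = ∏_i [c_i − h_i, c_i + h_i]`. -/
def box {d : ℕ} (c h : Fin d → ℝ) : Set (Fin d → ℝ) :=
  Set.univ.pi fun i => Set.Icc (c i - h i) (c i + h i)

/-- The iterated partial derivative `∂^α`. -/
noncomputable def pderivPow {d : ℕ} (α : Fin d → ℕ) :
    MvPolynomial (Fin d) ℝ →ₗ[ℝ] MvPolynomial (Fin d) ℝ :=
  (List.ofFn fun i : Fin d =>
    ((pderiv (R := ℝ) i).toLinearMap :
        Module.End ℝ (MvPolynomial (Fin d) ℝ)) ^ α i).prod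

/-- the bubble `b_i = (x_i - c_i)^2 - h_i^2` -/
noncomputable def bub {d : ℕ} (c h : Fin d → ℝ) (i : Fin d) : MvPolynomial (Fin d) ℝ :=
  (X i - C (c i)) ^ 2 - C (h i ^ 2)

lemma Q1_mono {d : ℕ} (α : Fin d →₀ ℕ) (h : ∀ i, α i ≤ 1) : monomial α (1:ℝ) ∈ Q1 d :=
  Submodule.subset_span ⟨α, h, rfl⟩

lemma Q1_le_PA {d : ℕ} {q : MvPolynomial (Fin d) ℝ} (hq : q ∈ Q1 d) : q ∈ PA d :=
  Submodule.mem_sup_left hq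

lemma sq_mul_mem_PA {d : ℕ} (i : Fin d) {q : MvPolynomial (Fin d) ℝ} (hq : q ∈ Q1 d) :
    X i ^ 2 * q ∈ PA d :=
  Submodule.mem_sup_right (Submodule.subset_span ⟨i, q, hq, rfl⟩)

lemma C_mem_Q1 {d : ℕ} (r : ℝ) : (C r : MvPolynomial (Fin d) ℝ) ∈ Q1 d := by
  have h := (Q1 d).smul_mem r (Q1_mono (0 : Fin d →₀ ℕ) (by simp))
  rwa [smul_monomial, smul_eq_mul, mul_one] at h

lemma X_mem_Q1 {d : ℕ} (i : Fin d) : (X i : MvPolynomial (Fin d) ℝ) ∈ Q1 d := by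
  refine Q1_mono (Finsupp.single i 1) ?_
  intro k
  rw [Finsupp.single_apply]; split_ifs <;> simp

lemma C_mul_mem {d : ℕ} (S : Submodule ℝ (MvPolynomial (Fin d) ℝ)) (r : ℝ)
    {q : MvPolynomial (Fin d) ℝ} (hq : q ∈ S) : C r * q ∈ S := by
  rw [← smul_eq_C_mul]; exact S.smul_mem r hq

lemma XX_mem_PA {d : ℕ} (i j : Fin d) : (X i * X j : MvPolynomial (Fin d) ℝ) ∈ PA d := by
  by_cases hij : i = j
  · subst hij
    have := sq_mul_mem_PA i (C_mem_Q1 (d := d) 1)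
    rwa [C_1, mul_one, sq] at this
  · apply Q1_le_PA
    have : (X i * X j : MvPolynomial (Fin d) ℝ)
        = monomial (Finsupp.single i 1 + Finsupp.single j 1) 1 := by
      simp [X, monomial_mul]
    rw [this]
    apply Q1_mono
    intro k
    simp only [Finsupp.add_apply, Finsupp.single_apply]
    split_ifs <;> simp_all

lemma Q1_degreeOf {d : ℕ} {q : MvPolynomial (Fin d) ℝ} (hq : q ∈ Q1 d) (i : Fin d) :
    q.degreeOf i ≤ 1 := by
  have : q ∈ restrictDegree (Fin d) ℝ 1 := by
    refine (Submodule.span_le.2 ?_ : Q1 d ≤ _) hq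
    rintro p ⟨α, hα, rfl⟩
    simp only [SetLike.mem_coe, mem_restrictDegree]
    intro s hs i
    have := support_monomial_subset hs
    rw [Finset.mem_singleton] at this
    subst this; exact hα i
  rw [mem_restrictDegree] at this
  rw [degreeOf_le_iff]
  intro m hm
  exact this m hm i

lemma Q1_unisolvent {d : ℕ} (c h : Fin d → ℝ) (hh : ∀ i, 0 < h i)
    {q : MvPolynomial (Fin d) ℝ} (hq : q ∈ Q1 d)
    (h0 : ∀ a, IsVertex c h a → eval a q = 0) : q = 0 := by
  classical
  refine eq_zero_of_eval_zero_at_prod_finset q (fun i => {c i - h i, c i + h i}) ?_ ?_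
  · intro i
    rw [Finset.card_pair (by have := hh i; intro h; linarith)]
    exact Nat.lt_succ_of_le (Q1_degreeOf hq i)
  · intro a ha
    apply h0
    intro i
    simpa using ha i

lemma eval_bub {d : ℕ} {c h a : Fin d → ℝ} (ha : IsVertex c h a) (i : Fin d) :
    eval a (bub c h i) = 0 := by
  simp only [bub, map_sub, map_pow, eval_X, eval_C]
  rcases ha i with h | h <;> rw [h] <;> ring

lemma pderiv_bub {d : ℕ} (c h : Fin d → ℝ) (i k : Fin d) :
    pderiv k (bub c h i) = if i = k then 2 * (X k - C (c k)) else 0 := by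
  simp only [bub, map_sub, Derivation.leibniz_pow, pderiv_C, pderiv_X]
  split_ifs with h
  · subst h; simp
  · simp [h]

/-- decomposition property -/
def Dec {d : ℕ} (c h : Fin d → ℝ) (e : MvPolynomial (Fin d) ℝ) : Prop :=
  ∃ q0 ∈ Q1 d, ∃ q : Fin d → MvPolynomial (Fin d) ℝ, (∀ i, q i ∈ Q1 d) ∧
    e = q0 + ∑ i, bub c h i * q i

lemma Dec.add {d : ℕ} {c h : Fin d → ℝ} {e f : MvPolynomial (Fin d) ℝ}
    (he : Dec c h e) (hf : Dec c h f) : Dec c h (e + f) := by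
  obtain ⟨p0, hp0, p, hp, rfl⟩ := he
  obtain ⟨q0, hq0, q, hq, rfl⟩ := hf
  refine ⟨p0 + q0, add_mem hp0 hq0, fun i => p i + q i, fun i => add_mem (hp i) (hq i), ?_⟩
  simp only [mul_add, Finset.sum_add_distrib]; ring

lemma Dec.smul {d : ℕ} {c h : Fin d → ℝ} {e : MvPolynomial (Fin d) ℝ} (r : ℝ)
    (he : Dec c h e) : Dec c h (r • e) := by
  obtain ⟨p0, hp0, p, hp, rfl⟩ := he
  refine ⟨r • p0, Submodule.smul_mem _ _ hp0, fun i => r • p i,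
    fun i => Submodule.smul_mem _ _ (hp i), ?_⟩
  simp only [smul_add, Finset.smul_sum, mul_smul_comm]

lemma Dec.of_Q1 {d : ℕ} {c h : Fin d → ℝ} {e : MvPolynomial (Fin d) ℝ}
    (he : e ∈ Q1 d) : Dec c h e :=
  ⟨e, he, fun _ => 0, fun _ => zero_mem _, by simp⟩

lemma Dec.bub_mul {d : ℕ} {c h : Fin d → ℝ} {e : MvPolynomial (Fin d) ℝ} (i : Fin d)
    (he : e ∈ Q1 d) : Dec c h (bub c h i * e) := by
  classical
  refine ⟨0, zero_mem _, fun k => if k = i then e else 0, fun k => ?_, by simp⟩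
  dsimp only
  split_ifs
  · exact he
  · exact zero_mem _

lemma X_sq_eq {d : ℕ} (c h : Fin d → ℝ) (i : Fin d) :
    (X i ^ 2 : MvPolynomial (Fin d) ℝ)
      = bub c h i + C (2 * c i) * X i + C (h i ^ 2 - c i ^ 2) := by
  simp only [bub, map_sub, map_mul, map_pow]
  rw [show (C (2:ℝ) : MvPolynomial (Fin d) ℝ) = 2 from map_ofNat C 2]
  ring

lemma Dec.sq_mul {d : ℕ} {c h : Fin d → ℝ} {e : MvPolynomial (Fin d) ℝ} (i : Fin d)
    (h1 : e ∈ Q1 d) (h2 : X i * e ∈ Q1 d) : Dec c h (X i ^ 2 * e) := by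
  have : X i ^ 2 * e = bub c h i * e + (C (2 * c i) * (X i * e) + C (h i ^ 2 - c i ^ 2) * e) := by
    rw [X_sq_eq c h]; ring
  rw [this]
  exact (Dec.bub_mul i h1).add (Dec.of_Q1 (add_mem (C_mul_mem _ _ h2) (C_mul_mem _ _ h1)))

lemma Dec.sq_mul_mono {d : ℕ} {c h : Fin d → ℝ} (i : Fin d) (α : Fin d →₀ ℕ)
    (hα : ∀ k, α k ≤ 1) : Dec c h (X i ^ 2 * monomial α (1:ℝ)) := by
  rcases Nat.lt_or_ge (α i) 1 with h0 | h1
  · refine Dec.sq_mul i (Q1_mono α hα) ?_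
    rw [X, monomial_mul, one_mul]
    refine Q1_mono _ fun k => ?_
    have := hα k
    rw [Finsupp.add_apply, Finsupp.single_apply]
    split_ifs with hk
    · subst hk; omega
    · omega
  · set β := α - Finsupp.single i 1 with hβ
    have hle : Finsupp.single i 1 ≤ α := by
      rw [Finsupp.single_le_iff]; exact h1
    have hm : monomial α (1:ℝ) = X i * monomial β 1 := by
      rw [X, monomial_mul, one_mul, hβ, add_tsub_cancel_of_le hle]
    have hβ1 : monomial β (1:ℝ) ∈ Q1 d := Q1_mono _ fun k => by
      have := hα k
      rw [hβ, Finsupp.tsub_apply]; omega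
    have hα1 := Q1_mono α hα
    have : X i ^ 2 * monomial α (1:ℝ) = bub c h i * monomial α 1
        + ((2 * c i) • (X i ^ 2 * monomial β 1) + C (h i ^ 2 - c i ^ 2) * monomial α 1) := by
      rw [smul_eq_C_mul]
      nth_rewrite 1 [X_sq_eq c h]
      rw [hm]; ring
    rw [this]
    refine (Dec.bub_mul i hα1).add (Dec.add (Dec.smul _ (Dec.sq_mul i hβ1 ?_))
      (Dec.of_Q1 (C_mul_mem _ _ hα1)))
    rw [← hm]; exact hα1

lemma Dec.of_PA {d : ℕ} {c h : Fin d → ℝ} {e : MvPolynomial (Fin d) ℝ}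
    (he : e ∈ PA d) : Dec c h e := by
  obtain ⟨p, hp, q, hq, rfl⟩ := Submodule.mem_sup.1 he
  refine (Dec.of_Q1 hp).add ?_
  induction hq using Submodule.span_induction with
  | mem x hx =>
    obtain ⟨i, q, hq, rfl⟩ := hx
    clear he
    induction hq using Submodule.span_induction with
    | mem x hx =>
      obtain ⟨α, hα, rfl⟩ := hx
      exact Dec.sq_mul_mono i α hα
    | zero => rw [mul_zero]; exact Dec.of_Q1 (zero_mem _)
    | add x y _ _ hx hy => rw [mul_add]; exact hx.add hy
    | smul r x _ hx => rw [mul_smul_comm]; exact hx.smul r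
  | zero => exact Dec.of_Q1 (zero_mem _)
  | add x y hx' hy' hx hy =>
    exact (hx (Submodule.mem_sup.2 ⟨p, hp, x, hx', rfl⟩)).add
      (hy (Submodule.mem_sup.2 ⟨p, hp, y, hy', rfl⟩))
  | smul r x hx' hx => exact (hx (Submodule.mem_sup.2 ⟨p, hp, x, hx', rfl⟩)).smul r

lemma PA_unisolvent {d : ℕ} (c h : Fin d → ℝ) (hh : ∀ i, 0 < h i)
    {e : MvPolynomial (Fin d) ℝ} (he : e ∈ PA d)
    (h0 : ∀ a, IsVertex c h a → eval a e = 0 ∧ ∀ k, eval a (pderiv k e) = 0) : e = 0 := by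
  obtain ⟨q0, hq0, q, hq, rfl⟩ := Dec.of_PA (c := c) (h := h) he
  have hz0 : q0 = 0 := by
    refine Q1_unisolvent c h hh hq0 fun a ha => ?_
    have := (h0 a ha).1
    simpa [map_sum, eval_bub ha] using this
  have hz : ∀ k, q k = 0 := by
    intro k
    refine Q1_unisolvent c h hh (hq k) fun a ha => ?_
    have := (h0 a ha).2 k
    rw [hz0, zero_add, map_sum, map_sum] at this
    simp only [Derivation.leibniz, pderiv_bub, smul_eq_mul, map_add, map_mul, eval_bub ha,
      zero_mul, zero_add] at this
    rw [Finset.sum_eq_single k] at this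
    · simp at this
      rcases this with h' | h'
      · exact h'
      · have := hh k
        rcases ha k with h'' | h'' <;> linarith
    · intro b _ hb; simp [hb]
    · simp
  simp [hz0, hz]

/-- span of products of bubbles -/
noncomputable def BB {d : ℕ} (c h : Fin d → ℝ) : Submodule ℝ (MvPolynomial (Fin d) ℝ) :=
  Submodule.span ℝ {p | ∃ k l : Fin d, p = bub c h k * bub c h l}

lemma XXXX_mem {d : ℕ} (c h : Fin d → ℝ) (i j : Fin d) :
    (X i ^ 2 * X j ^ 2 : MvPolynomial (Fin d) ℝ) ∈ PA d ⊔ BB c h := by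
  have key : (X i ^ 2 * X j ^ 2 : MvPolynomial (Fin d) ℝ) =
      (X i ^ 2 * (C (2 * c j) * X j + C (h j ^ 2 - c j ^ 2))
      + X j ^ 2 * (C (2 * c i) * X i + C (h i ^ 2 - c i ^ 2))
      - (C (2 * c i) * (C (2 * c j) * (X i * X j))
        + C (2 * c i) * (C (h j ^ 2 - c j ^ 2) * X i)
        + C (h i ^ 2 - c i ^ 2) * (C (2 * c j) * X j)
        + C (h i ^ 2 - c i ^ 2) * C (h j ^ 2 - c j ^ 2)))
      + bub c h i * bub c h j := by
    rw [X_sq_eq c h i, X_sq_eq c h j]; ring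
  rw [key]
  refine add_mem (Submodule.mem_sup_left ?_)
    (Submodule.mem_sup_right (Submodule.subset_span ⟨i, j, rfl⟩))
  have hl : ∀ (r s : ℝ) (k : Fin d), (C r * X k + C s : MvPolynomial (Fin d) ℝ) ∈ Q1 d :=
    fun r s k => add_mem (C_mul_mem _ _ (X_mem_Q1 k)) (C_mem_Q1 s)
  refine sub_mem (add_mem (sq_mul_mem_PA _ (hl _ _ _)) (sq_mul_mem_PA _ (hl _ _ _))) ?_
  refine add_mem (add_mem (add_mem ?_ ?_) ?_) ?_
  · exact C_mul_mem _ _ (C_mul_mem _ _ (XX_mem_PA i j))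
  · exact C_mul_mem _ _ (C_mul_mem _ _ (Q1_le_PA (X_mem_Q1 i)))
  · exact C_mul_mem _ _ (C_mul_mem _ _ (Q1_le_PA (X_mem_Q1 j)))
  · exact C_mul_mem _ _ (Q1_le_PA (C_mem_Q1 _))

lemma extract_sq {d : ℕ} (α : Fin d →₀ ℕ) (i : Fin d) (hi : 2 ≤ α i) :
    ∃ β : Fin d →₀ ℕ, β.degree + 2 = α.degree ∧
      monomial α (1:ℝ) = X i ^ 2 * monomial β 1 := by
  have hle : Finsupp.single i 2 ≤ α := by rw [Finsupp.single_le_iff]; exact hi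
  obtain ⟨β, rfl⟩ := exists_add_of_le hle
  refine ⟨β, ?_, ?_⟩
  · simp [add_comm]
  · rw [X_pow_eq_monomial, monomial_mul, one_mul]

lemma mono_mem {d : ℕ} (c h : Fin d → ℝ) (α : Fin d →₀ ℕ) (hα : α.degree ≤ 4) :
    monomial α (1:ℝ) ∈ PA d ⊔ BB c h := by
  by_cases h1 : ∀ i, α i ≤ 1
  · exact Submodule.mem_sup_left (Q1_le_PA (Q1_mono α h1))
  push Not at h1
  obtain ⟨i, hi⟩ := h1
  obtain ⟨β, hβ, hm⟩ := extract_sq α i hi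
  rw [hm]
  by_cases h2 : ∀ i, β i ≤ 1
  · exact Submodule.mem_sup_left (sq_mul_mem_PA i (Q1_mono β h2))
  push Not at h2
  obtain ⟨j, hj⟩ := h2
  obtain ⟨γ, hγ, hm'⟩ := extract_sq β j hj
  have : γ = 0 := by
    rw [← Finsupp.degree_eq_zero_iff]; omega
  subst this
  rw [hm', monomial_zero', C_1, mul_one]
  exact XXXX_mem c h i j

lemma deg4_mem {d : ℕ} (c h : Fin d → ℝ) (u : MvPolynomial (Fin d) ℝ)
    (hu : u.totalDegree ≤ 4) : u ∈ PA d ⊔ BB c h := by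
  rw [u.as_sum]
  refine Submodule.sum_mem _ fun s hs => ?_
  have h1 : s.degree ≤ 4 := by
    refine le_trans ?_ hu
    have := le_totalDegree hs
    simpa [Finsupp.degree_apply, Finsupp.sum] using this
  have := Submodule.smul_mem _ (coeff s u) (mono_mem c h s h1)
  rwa [smul_monomial, smul_eq_mul, mul_one] at this

lemma BB_vertex {d : ℕ} (c h : Fin d → ℝ) {s : MvPolynomial (Fin d) ℝ} (hs : s ∈ BB c h)
    {a : Fin d → ℝ} (ha : IsVertex c h a) :
    eval a s = 0 ∧ ∀ k, eval a (pderiv k s) = 0 := by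
  induction hs using Submodule.span_induction with
  | mem x hx =>
    obtain ⟨k, l, rfl⟩ := hx
    simp [Derivation.leibniz, eval_bub ha]
  | zero => simp
  | add x y _ _ hx hy => simp [hx.1, hx.2, hy.1, hy.2]
  | smul r x _ hx => simp [hx.1, hx.2, smul_eval]

lemma sub_mem_BB {d : ℕ} (c h : Fin d → ℝ) (hh : ∀ i, 0 < h i)
    (u : MvPolynomial (Fin d) ℝ) (hu : u.totalDegree ≤ 4)
    (w : MvPolynomial (Fin d) ℝ) (hw : w ∈ PA d)
    (hmatch : ∀ a : Fin d → ℝ, IsVertex c h a →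
      eval a w = eval a u ∧ ∀ k : Fin d, eval a (pderiv k w) = eval a (pderiv k u)) :
    u - w ∈ BB c h := by
  obtain ⟨p, hp, s, hs, rfl⟩ := Submodule.mem_sup.1 (deg4_mem c h u hu)
  have : p - w = 0 := by
    refine PA_unisolvent c h hh (sub_mem hp hw) fun a ha => ?_
    have h1 := hmatch a ha
    have h2 := BB_vertex c h hs ha
    refine ⟨?_, fun k => ?_⟩
    · have := h1.1; simp [h2.1] at this; simp [this]
    · have := h1.2 k; simp [h2.2 k] at this; simp [this]
  rw [show p + s - w = s + (p - w) by ring, this, add_zero]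
  exact hs

/-- second mixed derivative of a product of bubbles -/
lemma BB_mixed {d : ℕ} (c h : Fin d → ℝ) {s : MvPolynomial (Fin d) ℝ} (hs : s ∈ BB c h)
    (i j : Fin d) (hij : i ≠ j) :
    ∃ r : ℝ, pderiv i (pderiv j s) = C r * ((X i - C (c i)) * (X j - C (c j))) := by
  induction hs using Submodule.span_induction with
  | mem x hx =>
    obtain ⟨k, l, rfl⟩ := hx
    have hC : (C (4:ℝ) : MvPolynomial (Fin d) ℝ) = 4 := map_ofNat C 4
    have h2 : ∀ m : Fin d, pderiv m (2 : MvPolynomial (Fin d) ℝ) = 0 := fun m => by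
      rw [← (map_ofNat C 2 : (C (2:ℝ) : MvPolynomial (Fin d) ℝ) = 2), pderiv_C]
    have hdz : ∀ (m : Fin d), pderiv i (pderiv j (bub c h m)) = 0 := by
      intro m
      rw [pderiv_bub]
      split_ifs
      · simp [Derivation.leibniz, pderiv_X, hij.symm, h2]
      · simp
    simp only [Derivation.leibniz, smul_eq_mul, map_add, hdz]
    simp only [pderiv_bub]
    by_cases h1 : k = i ∧ l = j ∨ k = j ∧ l = i
    · refine ⟨4, ?_⟩
      rw [hC]
      rcases h1 with ⟨rfl, rfl⟩ | ⟨rfl, rfl⟩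
      · simp [hij, hij.symm]; ring
      · simp [hij, hij.symm]; ring
    · refine ⟨0, ?_⟩
      by_cases a1 : k = i <;> by_cases a2 : l = j <;> by_cases a3 : k = j <;>
        by_cases a4 : l = i <;> simp_all
  | zero => exact ⟨0, by simp⟩
  | add x y _ _ hx hy =>
    obtain ⟨r, hr⟩ := hx
    obtain ⟨t, ht⟩ := hy
    exact ⟨r + t, by simp only [map_add, hr, ht]; ring⟩
  | smul t x _ hx =>
    obtain ⟨r, hr⟩ := hx
    exact ⟨t * r, by rw [Derivation.map_smul, Derivation.map_smul, hr, smul_eq_C_mul, map_mul]; ring⟩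

lemma reflect_zero {d : ℕ} (c h : Fin d → ℝ) (i : Fin d) (f : (Fin d → ℝ) → ℝ)
    (hf : ∀ x, f (Function.update x i (2 * c i - x i)) = - f x) :
    ∫ x in box c h, f x = 0 := by
  classical
  set R : (Fin d → ℝ) → (Fin d → ℝ) := fun x => Function.update x i (2 * c i - x i) with hR
  have hinv : Function.Involutive R := by
    intro x; ext k
    by_cases hk : k = i
    · subst hk; simp [hR]
    · simp [hR, hk]
  have hRe : R = fun x k => (if k = i then (fun t : ℝ => 2 * c i - t) else id) (x k) := by
    ext x k
    by_cases hk : k = i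
    · subst hk; simp [hR]
    · simp [hR, hk]
  have hmp : MeasurePreserving R volume volume := by
    rw [hRe]
    refine volume_preserving_pi (f := fun k => if k = i then (fun t : ℝ => 2 * c i - t) else id) ?_
    intro k
    split_ifs
    · exact Measure.measurePreserving_sub_left volume (2 * c i)
    · exact MeasurePreserving.id _
  have hemb : MeasurableEmbedding R :=
    (MeasurableEquiv.ofInvolutive R hinv hmp.measurable).measurableEmbedding
  have hpre : R ⁻¹' box c h = box c h := by
    have hsub : ∀ x ∈ box c h, R x ∈ box c h := by
      intro x hx k _
      have hk' := hx k (Set.mem_univ _)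
      by_cases hk : k = i
      · subst hk
        simp only [hR, Function.update_self, Set.mem_Icc] at hk' ⊢
        constructor <;> linarith [hk'.1, hk'.2]
      · simpa [hR, hk] using hk'
    ext x
    refine ⟨fun hx => ?_, hsub x⟩
    have := hsub _ hx
    rwa [hinv] at this
  have := hmp.setIntegral_preimage_emb hemb f (box c h)
  rw [hpre] at this
  simp only [hR, hf, integral_neg] at this
  linarith

lemma box_integrable {d : ℕ} (c h : Fin d → ℝ) (p : MvPolynomial (Fin d) ℝ) :
    IntegrableOn (fun x => eval x p) (box c h) := by
  refine ContinuousOn.integrableOn_compact ?_ (MvPolynomial.continuous_eval p).continuousOn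
  exact isCompact_univ_pi fun i => isCompact_Icc

lemma eval_mono_indep {d : ℕ} (β : Fin d →₀ ℕ) (r : ℝ) (i : Fin d) (hβ : β i = 0)
    (x : Fin d → ℝ) (t : ℝ) :
    eval (Function.update x i t) (monomial β r) = eval x (monomial β r) := by
  rw [eval_monomial, eval_monomial]
  congr 1
  refine Finsupp.prod_congr fun k hk => ?_
  rw [Function.update_of_ne]
  rintro rfl
  exact (Finsupp.mem_support_iff.1 hk) hβ

lemma PA_le {d : ℕ} (i j : Fin d) (hij : i ≠ j) :
    PA d ≤ Submodule.span ℝ {p | ∃ α : Fin d →₀ ℕ, (α i ≤ 1 ∨ α j ≤ 1) ∧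
      p = monomial α (1:ℝ)} := by
  refine sup_le (Submodule.span_mono ?_) (Submodule.span_le.2 ?_)
  · rintro p ⟨α, hα, rfl⟩
    exact ⟨α, Or.inl (hα i), rfl⟩
  · rintro p ⟨k, q, hq, rfl⟩
    rw [SetLike.mem_coe]
    induction hq using Submodule.span_induction with
    | mem x hx =>
      obtain ⟨α, hα, rfl⟩ := hx
      refine Submodule.subset_span ⟨Finsupp.single k 2 + α, ?_, ?_⟩
      · by_cases hk : k = i
        · right
          have : k ≠ j := hk ▸ hij
          simpa [Finsupp.single_apply, this] using hα j
        · left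
          simpa [Finsupp.single_apply, hk] using hα i
      · rw [X_pow_eq_monomial, monomial_mul, one_mul]
    | zero => rw [mul_zero]; exact zero_mem _
    | add x y _ _ hx hy => rw [mul_add]; exact add_mem hx hy
    | smul r x _ hx => rw [mul_smul_comm]; exact Submodule.smul_mem _ _ hx

lemma PA_orth {d : ℕ} (c h : Fin d → ℝ) (i j : Fin d) (hij : i ≠ j)
    {v : MvPolynomial (Fin d) ℝ} (hv : v ∈ PA d) :
    ∫ x in box c h, eval x ((X i - C (c i)) * (X j - C (c j)) * pderiv i (pderiv j v)) = 0 := by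
  have hv' := PA_le i j hij hv
  clear hv
  induction hv' using Submodule.span_induction with
  | mem x hx =>
    obtain ⟨α, hα, rfl⟩ := hx
    rw [pderiv_monomial, pderiv_monomial]
    rcases hα with hα | hα
    · refine reflect_zero c h i _ fun x => ?_
      rw [map_mul, map_mul (eval x), eval_mono_indep]
      · simp [hij.symm]; ring
      · simp [Finsupp.single_apply, hij.symm]; omega
    · refine reflect_zero c h j _ fun x => ?_
      rw [map_mul, map_mul (eval x), eval_mono_indep]
      · simp [hij]; ring
      · simp [Finsupp.single_apply, hij]; omega
  | zero => simp
  | add x y _ _ hx hy =>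
    simp only [map_add, mul_add]
    rw [integral_add (box_integrable c h _) (box_integrable c h _), hx, hy, add_zero]
  | smul r x _ hx =>
    simp only [Derivation.map_smul, mul_smul_comm, smul_eval]
    rw [integral_const_mul, hx, mul_zero]

/-- for `u` of total degree at most 4, `v ∈ P_A`, and `w ∈ P_A` the Adini
canonical interpolant of `u`, the mixed terms vanish:
`∫_K ∂²(u−w)/∂x_i∂x_j ∂²v/∂x_i∂x_j = 0` for all `i ≠ j`. -/
theorem adini_mixed_terms_vanish (d : ℕ) (hd : 1 ≤ d)
    (c h : Fin d → ℝ) (hh : ∀ i, 0 < h i)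
    (u : MvPolynomial (Fin d) ℝ) (hu : u.totalDegree ≤ 4)
    (v : MvPolynomial (Fin d) ℝ) (hv : v ∈ PA d)
    (w : MvPolynomial (Fin d) ℝ) (hw : w ∈ PA d)
    (hmatch : ∀ a : Fin d → ℝ, IsVertex c h a →
      eval a w = eval a u ∧ ∀ k : Fin d, eval a (pderiv k w) = eval a (pderiv k u)) :
    ∀ i j : Fin d, i ≠ j →
      ∫ x in box c h,
        eval x (pderiv i (pderiv j (u - w))) * eval x (pderiv i (pderiv j v)) = 0 := by
  intro i j hij
  obtain ⟨r, hr⟩ := BB_mixed c h (sub_mem_BB c h hh u hu w hw hmatch) i j hij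
  have := PA_orth c h i j hij hv
  calc _ = ∫ x in box c h,
        r * eval x ((X i - C (c i)) * (X j - C (c j)) * pderiv i (pderiv j v)) := by
        congr 1; ext x; rw [hr]; simp only [map_mul, eval_C]; ring
    _ = 0 := by rw [integral_const_mul, this, mul_zero]
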